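/- arXiv:2511.02138 — 2 statements merged into one kernel-verified Lean document; each statement's English description precedes it below -/
import Mathlib

section
/- Let m ≥ 1 and let f : ℤᵐ × Fin m → ℝ satisfy Σ_{(v,j)∈E} |f(v,j)| < ∞ (f ∈ ℓ¹(E)) and ∂f = 0 (the defining sums converging absolutely). Then the family of shifts {τ_u f}_{u∈ℤᵐ} is not a Riesz system in ℓ²(E): for every δ > 0 there exists a finitely supported a : ℤᵐ → ℝ with Σ_u a(u)² > 0 and ‖Σ_{u∈ℤᵐ} a(u)·τ_u f‖²_{ℓ²(E)} < δ·Σ_{u∈ℤᵐ} a(u)². Consequently, for m ≥ 2 there is no translation-invariant Riesz system in ℓ²(E) consisting of closed 1-cochains belonging to ℓ¹(E). -/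
/-- The `j`-th standard generator of `ℤᵐ`. -/
def latGen (m : ℕ) (j : Fin m) : Fin m → ℤ := Pi.single j 1

/-- The boundary of a 1-cochain `f` on the edge set `E = ℤᵐ × Fin m` of the standard
Cayley graph of `ℤᵐ` (the edge `(v,j)` going from `v` to `v + e_j`):
`∂f(v) = Σ_j (f(v − e_j, j) − f(v, j))`. -/
def latBdry (m : ℕ) (f : (Fin m → ℤ) × Fin m → ℝ) (v : Fin m → ℤ) : ℝ :=
  ∑ j : Fin m, (f (v - latGen m j, j) - f (v, j))

/-- The shift `τ_u f` of a 1-cochain by `u ∈ ℤᵐ`. -/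
def latShift (m : ℕ) (u : Fin m → ℤ) (f : (Fin m → ℤ) × Fin m → ℝ) :
    (Fin m → ℤ) × Fin m → ℝ :=
  fun e => f (e.1 - u, e.2)

open Filter Topology

lemma aux_zero_sum (m : ℕ) (f : (Fin m → ℤ) × Fin m → ℝ)
    (hl1 : Summable fun e => |f e|) (hclosed : ∀ v, latBdry m f v = 0) (j : Fin m) :
    ∑' v, f (v, j) = 0 := by
  have hs : Summable f := hl1.of_abs
  have hsj : ∀ i, Summable fun v => |f (v, i)| := fun i =>
    hl1.comp_injective (i := fun v => (v, i)) (fun a b h => by simpa using h)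
  have hbs : ∀ (i : Fin m) (φ : (Fin m → ℤ) → ℝ) (B : ℝ), (∀ v, |φ v| ≤ B) →
      Summable fun v => φ v * f (v, i) := by
    intro i φ B hB
    refine Summable.of_norm_bounded ((hsj i).mul_left B) ?_
    intro v
    rw [Real.norm_eq_abs, abs_mul]
    exact mul_le_mul_of_nonneg_right (hB v) (abs_nonneg _)
  have key : ∀ (φ : (Fin m → ℤ) → ℝ) (B : ℝ), (∀ v, |φ v| ≤ B) →
      ∑ i, ∑' v, (φ (v + latGen m i) - φ v) * f (v, i) = 0 := by
    intro φ B hB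
    have h1 : ∀ i, HasSum (fun v => φ v * (f (v - latGen m i, i) - f (v, i)))
        (∑' v, (φ (v + latGen m i) - φ v) * f (v, i)) := by
      intro i
      have ha := hbs i (fun v => φ (v + latGen m i)) B (fun v => hB _)
      have hb := hbs i φ B hB
      have e : ∑' v, (φ (v + latGen m i) - φ v) * f (v, i) =
          ∑' v, φ (v + latGen m i) * f (v, i) - ∑' v, φ v * f (v, i) := by
        rw [← ha.tsum_sub hb]
        exact tsum_congr fun v => by ring
      rw [e]
      have ha' : HasSum (fun v => φ v * f (v - latGen m i, i))
          (∑' v, φ (v + latGen m i) * f (v, i)) := by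
        rw [← (Equiv.addRight (latGen m i)).hasSum_iff]
        convert ha.hasSum using 2 with v
        simp [Function.comp]
      have e2 : (fun v => φ v * (f (v - latGen m i, i) - f (v, i))) =
          fun v => φ v * f (v - latGen m i, i) - φ v * f (v, i) := funext fun v => by ring
      rw [e2]
      exact ha'.sub hb.hasSum
    have h2 := hasSum_sum (s := Finset.univ) fun i _ => h1 i
    rw [← h2.tsum_eq]
    convert tsum_zero with v
    rw [← Finset.mul_sum]
    have := hclosed v
    unfold latBdry at this
    rw [this, mul_zero]
  let φ : ℕ → (Fin m → ℤ) → ℝ := fun N v => ((max (-(N:ℤ)) (min (N:ℤ) (v j)) : ℤ) : ℝ)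
  have hφ : ∀ N v, |φ N v| ≤ N := by
    intro N v
    have : |max (-(N:ℤ)) (min (N:ℤ) (v j))| ≤ (N:ℤ) := by rw [abs_le]; omega
    simp only [φ]
    rw [← Int.cast_abs]
    exact_mod_cast this
  have hz : ∀ N, ∑' v, (φ N (v + latGen m j) - φ N v) * f (v, j) = 0 := by
    intro N
    rw [← key (φ N) N (hφ N)]
    symm
    apply Finset.sum_eq_single j
    · intro i _ hij
      convert tsum_zero with v
      have : φ N (v + latGen m i) = φ N v := by
        simp [φ, latGen, Pi.single_eq_of_ne (Ne.symm hij)]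
      rw [this]; simp
    · simp
  have hd : ∀ N v, φ N (v + latGen m j) - φ N v =
      ((max (-(N:ℤ)) (min (N:ℤ) (v j + 1)) - max (-(N:ℤ)) (min (N:ℤ) (v j)) : ℤ) : ℝ) := by
    intro N v
    simp [φ, latGen]
  have ht : Tendsto (fun N => ∑' v, (φ N (v + latGen m j) - φ N v) * f (v, j)) atTop
      (𝓝 (∑' v, f (v, j))) := by
    refine tendsto_tsum_of_dominated_convergence (hsj j) ?_ ?_
    · intro v
      apply tendsto_const_nhds.congr'
      filter_upwards [eventually_ge_atTop ((v j).natAbs + 1)] with N hN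
      rw [hd]
      have : max (-(N:ℤ)) (min (N:ℤ) (v j + 1)) - max (-(N:ℤ)) (min (N:ℤ) (v j)) = 1 := by omega
      rw [this]; simp
    · refine Eventually.of_forall fun N v => ?_
      rw [hd, Real.norm_eq_abs, abs_mul, ← Int.cast_abs]
      have : |max (-(N:ℤ)) (min (N:ℤ) (v j + 1)) - max (-(N:ℤ)) (min (N:ℤ) (v j))| ≤ 1 := by
        rw [abs_le]; omega
      have h' : ((|max (-(N:ℤ)) (min (N:ℤ) (v j + 1)) - max (-(N:ℤ)) (min (N:ℤ) (v j))| : ℤ) : ℝ)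
        ≤ 1 := by exact_mod_cast this
      exact mul_le_of_le_one_left (abs_nonneg _) h'
  simp only [hz] at ht
  exact (tendsto_nhds_unique ht tendsto_const_nhds)

open Classical in
noncomputable def auxChi {G : Type*} (Q : Finset G) (w : G) : ℝ := if w ∈ Q then 1 else 0

lemma auxChi_cases {G : Type*} (Q : Finset G) (w : G) : auxChi Q w = 0 ∨ auxChi Q w = 1 := by
  unfold auxChi; split_ifs <;> simp

lemma auxChi_hasSum {G : Type*} (Q : Finset G) (g : G → ℝ) :
    HasSum (fun w => auxChi Q w * g w) (∑ w ∈ Q, g w) := by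
  have : ∑ w ∈ Q, g w = ∑ w ∈ Q, auxChi Q w * g w :=
    Finset.sum_congr rfl fun w hw => by simp [auxChi, hw]
  rw [this]
  apply hasSum_sum_of_ne_finset_zero
  intro b hb
  simp [auxChi, hb]

lemma auxD_hasSum {G : Type*} [AddCommGroup G] (Q : Finset G) (v : G) :
    HasSum (fun w => |auxChi Q (w - v) - auxChi Q w|)
      (2 * (Q.card : ℝ) - 2 * ∑ w ∈ Q, auxChi Q (w - v)) := by
  have h0 := auxChi_hasSum Q (fun _ => 1)
  have h1 : HasSum (fun w => auxChi Q (w - v) * 1) (∑ w ∈ Q, (1:ℝ)) :=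
    (Equiv.subRight v).hasSum_iff.2 h0
  have h2 := auxChi_hasSum Q (fun w => auxChi Q (w - v))
  have := (h1.add h0).sub (h2.mul_left 2)
  have e : 2 * (Q.card : ℝ) - 2 * ∑ w ∈ Q, auxChi Q (w - v) =
      ∑ w ∈ Q, (1:ℝ) + ∑ w ∈ Q, (1:ℝ) - 2 * ∑ w ∈ Q, auxChi Q (w - v) := by
    simp only [Finset.sum_const, nsmul_eq_mul]; ring
  rw [e]
  have e2 : (fun w => |auxChi Q (w - v) - auxChi Q w|) = fun b =>
      auxChi Q (b - v) * 1 + auxChi Q b * 1 - 2 * (auxChi Q b * auxChi Q (b - v)) := by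
    funext w
    rcases auxChi_cases Q w with h | h <;> rcases auxChi_cases Q (w - v) with h' | h' <;>
      rw [h, h'] <;> norm_num
  rw [e2]
  exact this

lemma aux_est {G : Type*} [AddCommGroup G] (Q : Finset G) (g : G → ℝ)
    (hg : Summable fun v => |g v|) (h0 : ∑' v, g v = 0) :
    Summable (fun w => (∑ u ∈ Q, g (w - u)) ^ 2) ∧
    ∑' w, (∑ u ∈ Q, g (w - u)) ^ 2 ≤
      (∑' v, |g v|) * ∑' v, |g v| * (2 * (Q.card : ℝ) - 2 * ∑ w ∈ Q, auxChi Q (w - v)) := by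
  set D : G → ℝ := fun v => 2 * (Q.card : ℝ) - 2 * ∑ w ∈ Q, auxChi Q (w - v) with hD
  have hDs := auxD_hasSum Q
  have hD0 : ∀ v, 0 ≤ D v := fun v => (hDs v).nonneg fun _ => abs_nonneg _
  have hD2 : ∀ v, D v ≤ 2 * Q.card := by
    intro v
    have : 0 ≤ ∑ w ∈ Q, auxChi Q (w - v) := Finset.sum_nonneg fun w _ => by
      rcases auxChi_cases Q (w - v) with h | h <;> rw [h] <;> norm_num
    simp only [hD]; linarith
  have hb1 : ∀ w v, |auxChi Q (w - v) - auxChi Q w| ≤ 1 := by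
    intro w v
    rcases auxChi_cases Q w with h | h <;> rcases auxChi_cases Q (w - v) with h' | h' <;>
      rw [h, h'] <;> norm_num
  have hP : Summable (fun p : G × G => |g p.1| * |auxChi Q (p.2 - p.1) - auxChi Q p.2|) := by
    rw [summable_prod_of_nonneg (fun p => by positivity)]
    have hf : ∀ v, Summable fun w => |g v| * |auxChi Q (w - v) - auxChi Q w| :=
      fun v => (hDs v).summable.mul_left |g v|
    refine ⟨hf, ?_⟩
    simp only [tsum_mul_left, (hDs _).tsum_eq]
    refine Summable.of_nonneg_of_le (fun v => mul_nonneg (abs_nonneg _) (hD0 v))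
      (fun v => mul_le_mul_of_nonneg_left (hD2 v) (abs_nonneg _)) (hg.mul_right _)
  have hP' : Summable (fun p : G × G => |g p.2| * |auxChi Q (p.1 - p.2) - auxChi Q p.1|) :=
    hP.prod_symm
  have hin : ∀ w, Summable fun v => |g v| * |auxChi Q (w - v) - auxChi Q w| :=
    fun w => hP'.prod_factor w
  have hS : ∀ w, ∑ u ∈ Q, g (w - u) = ∑' v, g v * (auxChi Q (w - v) - auxChi Q w) := by
    intro w
    have h1 := auxChi_hasSum Q (fun u => g (w - u))
    have h2 : HasSum (fun v => auxChi Q (w - v) * g v) (∑ u ∈ Q, g (w - u)) := by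
      rw [← (Equiv.subLeft w).hasSum_iff]
      convert h1 using 2 with u
      simp
    have h3 : HasSum (fun v => g v * auxChi Q w) 0 := by
      have := hg.of_abs.hasSum.mul_right (auxChi Q w)
      rwa [h0, zero_mul] at this
    have := h2.sub h3
    rw [sub_zero] at this
    rw [← this.tsum_eq]
    exact tsum_congr fun v => by ring
  have hle : ∀ w, (∑ u ∈ Q, g (w - u)) ^ 2 ≤
      (∑' v, |g v|) * ∑' v, |g v| * |auxChi Q (w - v) - auxChi Q w| := by
    intro w
    rw [hS w, ← sq_abs, sq]
    have hA : |∑' v, g v * (auxChi Q (w - v) - auxChi Q w)| ≤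
        ∑' v, |g v| * |auxChi Q (w - v) - auxChi Q w| := by
      have h := norm_tsum_le_tsum_norm (f := fun v => g v * (auxChi Q (w - v) - auxChi Q w))
        (by simpa [abs_mul] using hin w)
      simpa [abs_mul] using h
    have hB : ∑' v, |g v| * |auxChi Q (w - v) - auxChi Q w| ≤ ∑' v, |g v| :=
      (hin w).tsum_le_tsum (fun v => mul_le_of_le_one_right (abs_nonneg _) (hb1 w v)) hg
    exact mul_le_mul (hA.trans hB) hA (abs_nonneg _) (tsum_nonneg fun _ => abs_nonneg _)
  have hR : Summable fun w => (∑' v, |g v|) * ∑' v, |g v| * |auxChi Q (w - v) - auxChi Q w| :=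
    hP'.prod.mul_left _
  have hL := Summable.of_nonneg_of_le (fun w => sq_nonneg _) hle hR
  refine ⟨hL, (hL.tsum_le_tsum hle hR).trans (le_of_eq ?_)⟩
  rw [tsum_mul_left, hP.tsum_comm]
  congr 1
  exact tsum_congr fun v => by rw [tsum_mul_left, (hDs v).tsum_eq]

noncomputable def auxBox (m N : ℕ) : Finset (Fin m → ℤ) := Fintype.piFinset fun _ => Finset.Ico 0 (N : ℤ)

lemma auxBox_card (m N : ℕ) : (auxBox m N).card = N ^ m := by
  simp [auxBox, Fintype.card_piFinset]

lemma aux_folner (m : ℕ) (v : Fin m → ℤ) :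
    Tendsto (fun N : ℕ => (2 * ((auxBox m N).card : ℝ) -
      2 * ∑ w ∈ auxBox m N, auxChi (auxBox m N) (w - v)) / (auxBox m N).card) atTop (𝓝 0) := by
  have hup : Tendsto (fun N : ℕ => 2 * (1 - ∏ i : Fin m, (1 - |(v i : ℝ)| / N))) atTop (𝓝 0) := by
    have : Tendsto (fun N : ℕ => 2 * (1 - ∏ i : Fin m, (1 - |(v i : ℝ)| / N))) atTop
        (𝓝 (2 * (1 - ∏ i : Fin m, (1 - (0:ℝ))))) := by
      refine (tendsto_const_nhds.sub (tendsto_finsetProd _ fun i _ => ?_)).const_mul _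
      exact tendsto_const_nhds.sub (tendsto_const_div_atTop_nhds_zero_nat _)
    simpa using this
  refine tendsto_of_tendsto_of_tendsto_of_le_of_le' tendsto_const_nhds hup ?_ ?_
  · refine Eventually.of_forall fun N => ?_
    exact div_nonneg ((auxD_hasSum _ v).nonneg fun _ => abs_nonneg _) (Nat.cast_nonneg _)
  · have hev : ∀ᶠ N : ℕ in atTop, ∀ i, (v i).natAbs ≤ N :=
      eventually_all.2 fun i => eventually_ge_atTop _
    filter_upwards [hev, eventually_ge_atTop 1] with N hN hN1
    have hNpos : (0:ℝ) < N := by exact_mod_cast hN1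
    set P : Finset (Fin m → ℤ) :=
      Fintype.piFinset fun i => Finset.Ico (max 0 (v i)) (min (N:ℤ) (N + v i)) with hPdef
    have hsub : P ⊆ auxBox m N := by
      intro w hw
      simp only [hPdef, auxBox, Fintype.mem_piFinset, Finset.mem_Ico] at hw ⊢
      intro i; have := hw i; omega
    have hmem : ∀ w ∈ P, auxChi (auxBox m N) (w - v) = 1 := by
      intro w hw
      have : w - v ∈ auxBox m N := by
        simp only [hPdef, auxBox, Fintype.mem_piFinset, Finset.mem_Ico, Pi.sub_apply] at hw ⊢
        intro i; have := hw i; omega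
      simp [auxChi, this]
    have hcard : (P.card : ℝ) = ∏ i, ((N:ℝ) - |(v i : ℝ)|) := by
      rw [hPdef, Fintype.card_piFinset, Nat.cast_prod]
      refine Finset.prod_congr rfl fun i _ => ?_
      rw [Int.card_Ico]
      have h1 : ((min (N:ℤ) (N + v i) - max 0 (v i)).toNat : ℤ) = N - |v i| := by
        have := hN i
        rcases abs_cases (v i) with h | h <;> omega
      have h2 : (((min (N:ℤ) (N + v i) - max 0 (v i)).toNat : ℤ) : ℝ) = ((N - |v i| : ℤ) : ℝ) := by
        rw [h1]
      push_cast at h2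
      simpa using h2
    have hge : (P.card : ℝ) ≤ ∑ w ∈ auxBox m N, auxChi (auxBox m N) (w - v) := by
      calc (P.card : ℝ) = ∑ w ∈ P, auxChi (auxBox m N) (w - v) := by
            rw [Finset.sum_congr rfl hmem]; simp
        _ ≤ _ := Finset.sum_le_sum_of_subset_of_nonneg hsub fun w _ _ => by
            rcases auxChi_cases (auxBox m N) (w - v) with h | h <;> rw [h] <;> norm_num
    have hc : ((auxBox m N).card : ℝ) = (N:ℝ) ^ m := by rw [auxBox_card]; push_cast; rfl
    have hprod : ∏ i : Fin m, (1 - |(v i : ℝ)| / N) = (P.card : ℝ) / (N:ℝ) ^ m := by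
      rw [hcard]
      have : (N:ℝ) ^ m = ∏ i : Fin m, (N:ℝ) := by simp
      rw [this, ← Finset.prod_div_distrib]
      exact Finset.prod_congr rfl fun i _ => by field_simp
    rw [hprod, hc, div_le_iff₀ (by positivity)]
    have : 2 * (1 - (P.card : ℝ) / (N:ℝ) ^ m) * (N:ℝ) ^ m = 2 * (N:ℝ) ^ m - 2 * P.card := by
      field_simp
    rw [this]; linarith

lemma aux_part1 (m : ℕ) (f : (Fin m → ℤ) × Fin m → ℝ)
    (hl1 : Summable fun e => |f e|) (hclosed : ∀ v, latBdry m f v = 0) :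
    ∀ δ : ℝ, 0 < δ → ∃ a : (Fin m → ℤ) → ℝ, (Function.support a).Finite ∧
      0 < ∑ᶠ u, a u ^ 2 ∧
      ∑' e : (Fin m → ℤ) × Fin m, (∑ᶠ u, a u * latShift m u f e) ^ 2 <
        δ * ∑ᶠ u, a u ^ 2 := by
  intro δ hδ
  have hsj : ∀ i, Summable fun v => |f (v, i)| := fun i =>
    hl1.comp_injective (i := fun v => (v, i)) (fun a b h => by simpa using h)
  set D : ℕ → (Fin m → ℤ) → ℝ := fun N v => 2 * ((auxBox m N).card : ℝ) -
      2 * ∑ w ∈ auxBox m N, auxChi (auxBox m N) (w - v) with hDdef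
  have hlim : Tendsto (fun N : ℕ => ∑ j : Fin m, (∑' v, |f (v, j)|) *
      ∑' v, |f (v, j)| * (D N v / (auxBox m N).card)) atTop (𝓝 0) := by
    have : Tendsto (fun N : ℕ => ∑ j : Fin m, (∑' v, |f (v, j)|) *
      ∑' v, |f (v, j)| * (D N v / (auxBox m N).card)) atTop
      (𝓝 (∑ j : Fin m, (∑' v, |f (v, j)|) * ∑' v, |f (v, j)| * 0)) := by
      refine tendsto_finsetSum _ fun j _ => Tendsto.const_mul _ ?_
      refine tendsto_tsum_of_dominated_convergence ((hsj j).mul_right 2) ?_ ?_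
      · intro v
        exact (aux_folner m v).const_mul _
      · refine Eventually.of_forall fun N v => ?_
        have h0 : 0 ≤ D N v := (auxD_hasSum _ v).nonneg fun _ => abs_nonneg _
        have h2 : D N v ≤ 2 * (auxBox m N).card := by
          have : 0 ≤ ∑ w ∈ auxBox m N, auxChi (auxBox m N) (w - v) :=
            Finset.sum_nonneg fun w _ => by
              rcases auxChi_cases (auxBox m N) (w - v) with h | h <;> rw [h] <;> norm_num
          simp only [hDdef]; linarith
        have h3 : D N v / (auxBox m N).card ≤ 2 :=
          div_le_of_le_mul₀ (Nat.cast_nonneg _) (by norm_num) h2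
        rw [Real.norm_eq_abs, abs_mul, abs_abs, abs_of_nonneg (div_nonneg h0 (Nat.cast_nonneg _))]
        exact mul_le_mul_of_nonneg_left h3 (abs_nonneg _)
    simpa using this
  obtain ⟨N, hN, hN1⟩ := ((hlim.eventually (gt_mem_nhds hδ)).and (eventually_ge_atTop 1)).exists
  set Q := auxBox m N with hQ
  have hQc : (0:ℝ) < Q.card := by
    rw [hQ, auxBox_card]; push_cast
    have : (0:ℝ) < N := by exact_mod_cast hN1
    positivity
  have hsupp : Function.support (auxChi Q) ⊆ Q := by
    intro w hw
    by_contra h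
    exact hw (by simpa [auxChi] using h)
  have hfs : ∀ g : (Fin m → ℤ) → ℝ, ∑ᶠ u, auxChi Q u * g u = ∑ u ∈ Q, g u := by
    intro g
    rw [finsum_eq_sum_of_support_subset (s := Q)]
    · exact Finset.sum_congr rfl fun w hw => by simp [auxChi, hw]
    · exact (Function.support_mul_subset_left _ _).trans hsupp
  have hsq : ∑ᶠ u, auxChi Q u ^ 2 = Q.card := by
    have h := hfs (auxChi Q)
    simp only [sq]
    rw [h]
    rw [Finset.sum_congr rfl (g := fun _ => (1:ℝ)) (fun w hw => by simp [auxChi, hw])]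
    simp
  refine ⟨auxChi Q, Q.finite_toSet.subset hsupp, by rw [hsq]; exact hQc, ?_⟩
  rw [hsq]
  have hest := fun j => aux_est Q (fun v => f (v, j)) (hsj j) (aux_zero_sum m f hl1 hclosed j)
  have hconv : ∀ e : (Fin m → ℤ) × Fin m, (∑ᶠ u, auxChi Q u * latShift m u f e) =
      ∑ u ∈ Q, f (e.1 - u, e.2) := fun e => hfs _
  have hHas : HasSum (fun e : (Fin m → ℤ) × Fin m => (∑ u ∈ Q, f (e.1 - u, e.2)) ^ 2)
      (∑ j, ∑' w, (∑ u ∈ Q, f (w - u, j)) ^ 2) := by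
    have hsm : Summable fun p : Fin m × (Fin m → ℤ) => (∑ u ∈ Q, f (p.2 - u, p.1)) ^ 2 := by
      rw [summable_prod_of_nonneg (fun p => sq_nonneg _)]
      exact ⟨fun j => (hest j).1, Summable.of_finite⟩
    have h1 := hsm.hasSum
    rw [hsm.tsum_prod, tsum_fintype] at h1
    exact ((Equiv.prodComm (Fin m → ℤ) (Fin m)).hasSum_iff
      (f := fun p : Fin m × (Fin m → ℤ) => (∑ u ∈ Q, f (p.2 - u, p.1)) ^ 2)).2 h1
  simp only [hconv]
  rw [hHas.tsum_eq]
  calc ∑ j, ∑' w, (∑ u ∈ Q, f (w - u, j)) ^ 2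
      ≤ ∑ j : Fin m, (∑' v, |f (v, j)|) * ∑' v, |f (v, j)| * D N v :=
        Finset.sum_le_sum fun j _ => (hest j).2
    _ = (∑ j : Fin m, (∑' v, |f (v, j)|) * ∑' v, |f (v, j)| * (D N v / Q.card)) * Q.card := by
        rw [Finset.sum_mul]
        refine Finset.sum_congr rfl fun j _ => ?_
        rw [mul_assoc]
        congr 1
        rw [← tsum_mul_right]
        exact tsum_congr fun v => by field_simp
    _ < δ * Q.card := mul_lt_mul_of_pos_right hN hQc

lemma aux_inj (m : ℕ) (h : (Fin m → ℤ) × Fin m → ℝ) (hl1 : Summable fun e => |h e|)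
    (hne : h ≠ 0) : Function.Injective fun u => latShift m u h := by
  intro u u' huu
  by_contra hc
  apply hne
  funext e
  have hp : ∀ x : Fin m → ℤ, ∀ j, h (x + (u - u'), j) = h (x, j) := by
    intro x j
    have := congrFun huu (x + u, j)
    simp only [latShift] at this
    rw [show x + u - u = x by abel, show x + u - u' = x + (u - u') by abel] at this
    exact this.symm
  have hn : ∀ n : ℕ, h (e.1 + n • (u - u'), e.2) = h e := by
    intro n
    induction n with
    | zero => simp
    | succ n ih => rw [succ_nsmul, ← add_assoc, hp, ih]
  have hinj : Function.Injective fun n : ℕ => ((e.1 + n • (u - u'), e.2) : (Fin m → ℤ) × Fin m) := by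
    intro a b hab
    simp only [Prod.mk.injEq, and_true, add_right_inj] at hab
    obtain ⟨i, hi⟩ := Function.ne_iff.1 (sub_ne_zero.2 hc)
    have := congrFun hab i
    simp only [Pi.smul_apply, nsmul_eq_mul] at this
    have := mul_right_cancel₀ hi this
    exact_mod_cast this
  have hs := hl1.of_abs.comp_injective hinj
  have := hs.tendsto_atTop_zero
  simp only [Function.comp_def, hn] at this
  exact tendsto_nhds_unique tendsto_const_nhds this

lemma aux_finsum {α β : Type*} (φ : α → β) (hφ : Function.Injective φ) (F : β → ℝ)
    (hF : ∀ b, b ∉ Set.range φ → F b = 0) : ∑ᶠ b, F b = ∑ᶠ x, F (φ x) := by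
  rw [← finsum_mem_range hφ]
  refine finsum_congr fun b => ?_
  by_cases hb : b ∈ Set.range φ
  · simp only [hb, finsum_true]
  · simp only [hb, finsum_false, hF b hb]

lemma aux_lift {E α : Type*} {F : Set (E → ℝ)} (φ : α → F) (hφ : Function.Injective φ) (C : ℝ)
    (hR : ∀ a : F → ℝ, (Function.support a).Finite →
        C⁻¹ * ∑ᶠ h, a h ^ 2 ≤ ∑' e : E, (∑ᶠ h : F, a h * h.1 e) ^ 2 ∧
          ∑' e : E, (∑ᶠ h : F, a h * h.1 e) ^ 2 ≤ C * ∑ᶠ h, a h ^ 2)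
    (a : α → ℝ) (ha : (Function.support a).Finite) :
    C⁻¹ * ∑ᶠ u, a u ^ 2 ≤ ∑' e : E, (∑ᶠ u, a u * (φ u).1 e) ^ 2 := by
  classical
  set b : F → ℝ := Function.extend φ a 0 with hb
  have hz : ∀ x, x ∉ Set.range φ → b x = 0 := by
    intro x hx
    rw [hb, Function.extend_apply' _ _ _ (by simpa using hx)]; rfl
  have hap : ∀ u, b (φ u) = a u := fun u => hφ.extend_apply a 0 u
  have hfin : (Function.support b).Finite := by
    refine (ha.image φ).subset ?_
    intro x hx
    by_cases hr : x ∈ Set.range φ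
    · obtain ⟨u, rfl⟩ := hr
      exact ⟨u, by simpa [hap] using hx, rfl⟩
    · exact absurd (hz x hr) hx
  have := (hR b hfin).1
  rw [aux_finsum φ hφ (fun x => b x ^ 2) (fun x hx => by simp [hz x hx])] at this
  simp only [hap] at this
  refine this.trans (le_of_eq (tsum_congr fun e => ?_))
  rw [aux_finsum φ hφ (fun x => b x * x.1 e) (fun x hx => by simp [hz x hx])]
  simp only [hap]

/-- For a closed 1-cochain `f ∈ ℓ¹(E)` on the standard Cayley graph of
`ℤᵐ`, the family of shifts `{τ_u f}` is not a Riesz system in `ℓ²(E)`; consequently, for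
`m ≥ 2` there is no (nonempty) translation-invariant Riesz system in `ℓ²(E)` consisting
of closed 1-cochains belonging to `ℓ¹(E)`. -/
theorem coexact_stmt_15 (m : ℕ) (hm : 1 ≤ m) (f : (Fin m → ℤ) × Fin m → ℝ)
    (hl1 : Summable fun e => |f e|) (hclosed : ∀ v, latBdry m f v = 0) :
    (∀ δ : ℝ, 0 < δ → ∃ a : (Fin m → ℤ) → ℝ, (Function.support a).Finite ∧
      0 < ∑ᶠ u, a u ^ 2 ∧
      ∑' e : (Fin m → ℤ) × Fin m, (∑ᶠ u, a u * latShift m u f e) ^ 2 <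
        δ * ∑ᶠ u, a u ^ 2) ∧
    (2 ≤ m → ¬ ∃ F : Set ((Fin m → ℤ) × Fin m → ℝ), F.Nonempty ∧
      (∀ h ∈ F, (Summable fun e => |h e|) ∧ ∀ v, latBdry m h v = 0) ∧
      (∀ h ∈ F, ∀ u : Fin m → ℤ, latShift m u h ∈ F) ∧
      ∃ C : ℝ, 0 < C ∧ ∀ a : F → ℝ, (Function.support a).Finite →
        C⁻¹ * ∑ᶠ h, a h ^ 2 ≤
            ∑' e : (Fin m → ℤ) × Fin m, (∑ᶠ h : F, a h * h.1 e) ^ 2 ∧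
          ∑' e : (Fin m → ℤ) × Fin m, (∑ᶠ h : F, a h * h.1 e) ^ 2 ≤
            C * ∑ᶠ h, a h ^ 2) := by
  refine ⟨aux_part1 m f hl1 hclosed, ?_⟩
  rintro - ⟨F, ⟨h, hF⟩, hprop, hinv, C, hC, hR⟩
  have hCi : 0 < C⁻¹ := inv_pos.2 hC
  by_cases h0 : h = 0
  · have hφ : Function.Injective fun _ : Unit => (⟨h, hF⟩ : F) := fun _ _ _ => rfl
    have := (aux_lift (fun _ : Unit => (⟨h, hF⟩ : F)) hφ C hR (fun _ => 1) (Set.toFinite _))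
    simp only [h0, Pi.zero_apply, mul_zero, finsum_zero, tsum_zero, finsum_unique] at this
    norm_num at this
    linarith
  · obtain ⟨a, ha, hpos, hlt⟩ := aux_part1 m h (hprop h hF).1 (hprop h hF).2 C⁻¹ hCi
    have hφ : Function.Injective fun u => (⟨latShift m u h, hinv h hF u⟩ : F) := by
      intro u u' huu
      exact aux_inj m h (hprop h hF).1 h0 (congrArg Subtype.val huu)
    have := aux_lift (fun u => (⟨latShift m u h, hinv h hF u⟩ : F)) hφ C hR a ha
    exact absurd hlt (not_lt.2 this)
end

section
/- Let m ≥ 2 and consider the edge set E' = ℤᵐ × Fin (m+1) of the Cayley graph of ℤᵐ with the duplicated generating family (e₁, e₂, …, e_m, e₁): for j ∈ {0,…,m−1} the edge (v,j) goes from v to v + e_{j+1}, and the edge (v,m) goes from v to v + e₁. Define f : E' → ℝ by f(0,0) = 1, f(e₁,1) = 1, f(e₂,m) = −1, f(0,1) = −1, and f = 0 on all other edges (this is the closed 1-chain of the 4-cycle 0 → e₁ → e₁+e₂ → e₂ → 0 whose third edge uses the duplicated copy of e₁ reversed and whose fourth edge uses e₂ reversed). Then the family of shifts {τ_u f}_{u∈ℤᵐ}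 is a Riesz system in ℓ²(E'): there exists C ∈ (0,∞) such that for every finitely supported a : ℤᵐ → ℝ, C⁻¹·Σ_u a(u)² ≤ ‖Σ_{u∈ℤᵐ} a(u)·τ_u f‖²_{ℓ²(E')} ≤ C·Σ_u a(u)². -/
/-- The closed 1-chain of the 4-cycle `0 → e₁ → e₁+e₂ → e₂ → 0` on the Cayley graph of
`ℤᵐ` with the duplicated generating family `(e₁, e₂, …, e_m, e₁)`; the edge set is
`E' = ℤᵐ × Fin (m+1)`, the edge `(v,j)` going from `v` to `v + e_{j+1}` for `j < m` and
the edge `(v,m)` going from `v` to `v + e₁` (the duplicated copy of `e₁`).  The third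
edge of the 4-cycle uses the duplicated copy of `e₁` reversed and the fourth edge uses
`e₂` reversed:  `f(0,0) = 1`, `f(e₁,1) = 1`, `f(e₂,m) = −1`, `f(0,1) = −1`, and `f = 0`
on all other edges. -/
def dupCochain (m : ℕ) (hm : 2 ≤ m) : (Fin m → ℤ) × Fin (m + 1) → ℝ :=
  fun e =>
    if e.1 = 0 ∧ e.2 = (⟨0, by omega⟩ : Fin (m + 1)) then 1
    else if e.1 = Pi.single (⟨0, by omega⟩ : Fin m) 1 ∧
        e.2 = (⟨1, by omega⟩ : Fin (m + 1)) then 1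
    else if e.1 = Pi.single (⟨1, by omega⟩ : Fin m) 1 ∧ e.2 = Fin.last m then -1
    else if e.1 = 0 ∧ e.2 = (⟨1, by omega⟩ : Fin (m + 1)) then -1
    else 0

theorem slice_hasSum {V J : Type*} [DecidableEq J] (j : J) (h : V → ℝ) (s : ℝ) (hs : HasSum h s) :
    HasSum (fun e : V × J => if e.2 = j then h e.1 else 0) s := by
  have hinj : Function.Injective (fun v : V => (v, j)) := fun a b hab => (Prod.ext_iff.1 hab).1
  rw [← hinj.hasSum_iff]
  · simpa [Function.comp_def] using hs
  · rintro ⟨v, k⟩ hx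
    have : k ≠ j := by
      rintro rfl
      exact hx ⟨v, rfl⟩
    simp [this]

theorem shift_hasSum {V : Type*} [AddCommGroup V] (w : V) (h : V → ℝ) (s : ℝ) (hs : HasSum h s) :
    HasSum (fun v => h (v - w)) s :=
  ((Equiv.subRight w).hasSum_iff (f := h)).2 hs

theorem finsum_ind {V : Type*} [AddCommGroup V] [DecidableEq V] (a : V → ℝ) (v w : V) (c : ℝ) :
    ∑ᶠ u, a u * (if v - u = w then c else 0) = a (v - w) * c := by
  rw [finsum_eq_single _ (v - w)]
  · simp
  · intro u hu
    have : v - u ≠ w := by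
      rintro rfl
      simp at hu
    simp [this]

theorem conv_eq (m : ℕ) (hm : 2 ≤ m) (a : (Fin m → ℤ) → ℝ) (v : Fin m → ℤ) (j : Fin (m + 1))
    (ha : (Function.support a).Finite) :
    (∑ᶠ u, a u * dupCochain m hm (v - u, j)) ^ 2 =
      (if j = (⟨0, by omega⟩ : Fin (m + 1)) then a v ^ 2 else 0) +
      (if j = (⟨1, by omega⟩ : Fin (m + 1)) then
        (a (v - Pi.single (⟨0, by omega⟩ : Fin m) 1) - a v) ^ 2 else 0) +
      (if j = Fin.last m then a (v - Pi.single (⟨1, by omega⟩ : Fin m) 1) ^ 2 else 0) := by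
  have h01 : (⟨0, by omega⟩ : Fin (m + 1)) ≠ ⟨1, by omega⟩ := by simp [Fin.ext_iff]
  have h0l : (⟨0, by omega⟩ : Fin (m + 1)) ≠ Fin.last m := by
    simp only [ne_eq, Fin.ext_iff, Fin.val_last]; omega
  have h1l : (⟨1, by omega⟩ : Fin (m + 1)) ≠ Fin.last m := by
    simp only [ne_eq, Fin.ext_iff, Fin.val_last]; omega
  unfold dupCochain
  by_cases h0 : j = (⟨0, by omega⟩ : Fin (m + 1))
  · subst h0
    simp only [h01, h0l, and_true, and_false, if_false, if_true, finsum_ind]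
    simp
  by_cases h1 : j = (⟨1, by omega⟩ : Fin (m + 1))
  · subst h1
    have hs : (Pi.single (⟨0, by omega⟩ : Fin m) (1 : ℤ) : Fin m → ℤ) ≠ 0 := by simp
    simp only [h01.symm, h1l, and_true, and_false, if_false, if_true]
    have key : ∀ u, a u * (if v - u = Pi.single (⟨0, by omega⟩ : Fin m) 1 then (1 : ℝ)
        else if v - u = 0 then -1 else 0) =
        a u * (if v - u = Pi.single (⟨0, by omega⟩ : Fin m) 1 then 1 else 0) +
        a u * (if v - u = 0 then -1 else 0) := by
      intro u
      by_cases h : v - u = 0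
      · simp [h, hs.symm]
      · simp [h]
    rw [finsum_congr key, finsum_add_distrib, finsum_ind, finsum_ind]
    · simp; ring
    · exact ha.subset (fun u hu => by
        simp only [Function.mem_support] at hu ⊢; exact left_ne_zero_of_mul hu)
    · exact ha.subset (fun u hu => by
        simp only [Function.mem_support] at hu ⊢; exact left_ne_zero_of_mul hu)
  by_cases hl : j = Fin.last m
  · subst hl
    simp only [h0l.symm, h1l.symm, and_true, and_false, if_false, if_true, finsum_ind]
    simp
  · simp only [h0, h1, hl, and_false, if_false]
    simp

/-- For `m ≥ 2`, the family of `ℤᵐ`-shifts of the 4-cycle 1-chain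
`dupCochain` (on the Cayley graph of `ℤᵐ` with a duplicated generator) is a Riesz system
in `ℓ²(E')`. -/
theorem coexact_stmt_16 (m : ℕ) (hm : 2 ≤ m) :
    ∃ C : ℝ, 0 < C ∧ ∀ a : (Fin m → ℤ) → ℝ, (Function.support a).Finite →
      C⁻¹ * ∑ᶠ u, a u ^ 2 ≤
          ∑' e : (Fin m → ℤ) × Fin (m + 1),
            (∑ᶠ u, a u * dupCochain m hm (e.1 - u, e.2)) ^ 2 ∧
        ∑' e : (Fin m → ℤ) × Fin (m + 1),
            (∑ᶠ u, a u * dupCochain m hm (e.1 - u, e.2)) ^ 2 ≤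
          C * ∑ᶠ u, a u ^ 2 := by
  refine ⟨6, by norm_num, fun a ha => ?_⟩
  have hfin : (Function.support fun u => a u ^ 2).Finite :=
    ha.subset (fun u hu => by
      simp only [Function.mem_support] at hu ⊢; exact fun h => hu (by simp [h]))
  have hS : HasSum (fun u => a u ^ 2) (∑ᶠ u, a u ^ 2) := by
    rw [← tsum_eq_finsum (L := SummationFilter.unconditional _) hfin]
    exact (summable_of_finite_support hfin).hasSum
  set S := ∑ᶠ u, a u ^ 2 with hSdef
  have hS0 : 0 ≤ S := hS.nonneg (fun u => sq_nonneg _)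
  have h1 := shift_hasSum (Pi.single (⟨0, by omega⟩ : Fin m) 1) _ _ hS
  have h2 := shift_hasSum (Pi.single (⟨1, by omega⟩ : Fin m) 1) _ _ hS
  have hb := (h1.add hS).mul_left 2
  have hle : ∀ v, (a (v - Pi.single (⟨0, by omega⟩ : Fin m) 1) - a v) ^ 2 ≤
      2 * (a (v - Pi.single (⟨0, by omega⟩ : Fin m) 1) ^ 2 + a v ^ 2) := fun v => by
    nlinarith [sq_nonneg (a (v - Pi.single (⟨0, by omega⟩ : Fin m) 1) + a v)]
  have hT := (Summable.of_nonneg_of_le (fun v => sq_nonneg _) hle hb.summable).hasSum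
  have hT0 := hT.nonneg (fun v => sq_nonneg _)
  have hT4 := hasSum_le hle hT hb
  have htot := ((slice_hasSum (⟨0, by omega⟩ : Fin (m + 1)) _ _ hS).add
    (slice_hasSum (⟨1, by omega⟩ : Fin (m + 1)) _ _ hT)).add
    (slice_hasSum (Fin.last m) _ _ h2)
  simp_rw [← conv_eq m hm a _ _ ha] at htot
  rw [htot.tsum_eq]
  constructor <;> linarith
end
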